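/- arXiv:2105.07247 — 3 statements merged into one kernel-verified Lean document; each statement's English description precedes it below -/
import Mathlib

section
/- Let G be a finite group, N a normal subgroup with Q = G/N abelian, q ∈ G, and k ≥ 1 an integer. Then R_q ⊆ R_{q^k} (every Q̂-orbit of irreducible characters of G containing a character not identically zero on qN also contains one not identically zero on q^k N), and the number of conjugacy classes of G contained in qN is at most the number of conjugacy classes of G contained in q^k N. -/
open scoped BigOperators

/-- `ρ : G → ℂ` is the character of an irreducible (simple) finite-dimensional
complex representation of `G`. -/
def IsIrrChar (G : Type) [Group G] (ρ : G → ℂ) : Prop :=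
  ∃ V : FDRep ℂ G, CategoryTheory.Simple V ∧ ρ = V.character

/-- `Θ : G → ℂ` is the character of some finite-dimensional complex representation of `G`. -/
def IsChar (G : Type) [Group G] (Θ : G → ℂ) : Prop :=
  ∃ V : FDRep ℂ G, Θ = V.character

variable {G : Type} [Group G]

/-- The action of a character `χ ∈ Q̂` (where `Q = G ⧸ N`) on a function `ρ : G → ℂ`:
`(χ · ρ)(g) = χ(gN) · ρ(g)`. -/
def charMul (N : Subgroup G) [N.Normal] (χ : (G ⧸ N) →* ℂˣ) (ρ : G → ℂ) : G → ℂ :=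
  fun g => (χ (g : G ⧸ N) : ℂ) * ρ g

/-- The orbit of `ρ` under the tensoring action of `Q̂ = Hom(G ⧸ N, ℂˣ)`. -/
def qhatOrbit (N : Subgroup G) [N.Normal] (ρ : G → ℂ) : Set (G → ℂ) :=
  {ρ' | ∃ χ : (G ⧸ N) →* ℂˣ, ρ' = charMul N χ ρ}

/-- The coset `qN`, as a subset of `G`. -/
def coset (N : Subgroup G) [N.Normal] (q : G) : Set G :=
  {g | (g : G ⧸ N) = (q : G ⧸ N)}

/-- `C_q`: the set of conjugacy classes of `G` contained in the coset `qN`. -/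
def Cset (N : Subgroup G) [N.Normal] (q : G) : Set (ConjClasses G) :=
  {c | c.carrier ⊆ coset N q}

/-- `R_q`: the set of `Q̂`-orbits on the irreducible characters of `G`
containing a character not identically zero on `qN`. -/
def Rset (N : Subgroup G) [N.Normal] (q : G) : Set (Set (G → ℂ)) :=
  {S | (∃ ρ, IsIrrChar G ρ ∧ S = qhatOrbit N ρ) ∧ ∃ ρ' ∈ S, ∃ g ∈ coset N q, ρ' g ≠ 0}

/-- The class function `π_x` for `x ∈ Q = G ⧸ N`:
`π_x(g) = (1/#Q̂) ∑_{χ ∈ Q̂} conj(χ(x)) χ(gN)`. -/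
noncomputable def piQ (N : Subgroup G) [N.Normal] (x : G ⧸ N) : G → ℂ :=
  fun g => (Nat.card ((G ⧸ N) →* ℂˣ) : ℂ)⁻¹ *
    ∑ᶠ χ : (G ⧸ N) →* ℂˣ, (starRingEnd ℂ) (χ x : ℂ) * (χ (g : G ⧸ N) : ℂ)

/-- The space of class functions on `G`, as a submodule of `G → ℂ`. -/
noncomputable def classFunSubmodule (G : Type) [Group G] : Submodule ℂ (G → ℂ) where
  carrier := {f | ∀ g h : G, f (h * g * h⁻¹) = f g}
  add_mem' := by intro a b ha hb g h; simp only [Pi.add_apply, ha g h, hb g h]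
  zero_mem' := by intro g h; rfl
  smul_mem' := by intro c f hf g h; simp only [Pi.smul_apply, hf g h]

/-- The space of class functions on `G` vanishing outside the coset `qN`. -/
noncomputable def cosetClassFun (N : Subgroup G) [N.Normal] (q : G) : Submodule ℂ (G → ℂ) where
  carrier := {f | (∀ g h : G, f (h * g * h⁻¹) = f g) ∧ ∀ g, g ∉ coset N q → f g = 0}
  add_mem' := by
    intro a b ha hb
    exact ⟨fun g h => by simp only [Pi.add_apply, ha.1 g h, hb.1 g h],
      fun g hg => by simp only [Pi.add_apply, ha.2 g hg, hb.2 g hg, add_zero]⟩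
  zero_mem' := ⟨fun g h => rfl, fun g hg => rfl⟩
  smul_mem' := by
    intro c f hf
    exact ⟨fun g h => by simp only [Pi.smul_apply, hf.1 g h],
      fun g hg => by simp only [Pi.smul_apply, hf.2 g hg, smul_zero]⟩

/-!
Fourier inversion on `Q = G ⧸ N` writes the restriction of a class function `f` to `qN`, extended
by zero, as the average of `χ(q)⁻¹ • (χ · f)` over `χ ∈ Q̂`. For an irreducible `ρ`, orthogonality
then shows that `ρ` is nonzero on `qN` if and only if `χ(q) = 1` for every `χ` fixing `ρ`, a
condition that passes from `q` to its powers. It also shows that the restrictions to `qN` of one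
character from each orbit in `R_q` are linearly independent; as irreducible characters span the
class functions, they form a basis of the class functions supported on `qN`. Hence `#C_q = #R_q`.
-/

section DualGroup

variable {Q R : Type*} [CommGroup Q] [Finite Q] [CommRing R] [IsDomain R]
  [HasEnoughRootsOfUnity R (Monoid.exponent Q)] [Fintype (Q →* Rˣ)]

theorem sum_monoidHom_units_apply [DecidableEq Q] (x : Q) :
    ∑ χ : Q →* Rˣ, (χ x : R) = if x = 1 then (Fintype.card (Q →* Rˣ) : R) else 0 := by
  split_ifs with hx
  · simp [hx]
  · obtain ⟨χ, hχ⟩ := CommGroup.exists_apply_ne_one_of_hasEnoughRootsOfUnity Q R hx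
    refine sum_hom_units_eq_zero ((Units.coeHom R).comp (MonoidHom.eval x)) fun h => hχ ?_
    exact Units.ext (DFunLike.congr_fun h χ)

end DualGroup

section Schur

variable {k Γ V : Type*} [Group Γ] [Fintype Γ]

/-- The endomorphism `∑ g, f g • ρ g` attached to a function `f` that is constant on conjugacy
classes, as an intertwining map. -/
def intertwiningMapOfClassFun [CommSemiring k] [AddCommMonoid V] [Module k V]
    (ρ : Representation k Γ V) (f : Γ → k) (hf : ∀ g h : Γ, f (h * g * h⁻¹) = f g) :
    ρ.IntertwiningMap ρ where
  toLinearMap := ∑ g, f g • ρ g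
  isIntertwining' h := by
    rw [← Module.End.mul_eq_comp, ← Module.End.mul_eq_comp, Finset.sum_mul, Finset.mul_sum,
      ← Equiv.sum_comp (MulAut.conj h).toEquiv]
    refine Finset.sum_congr rfl fun g _ => ?_
    simp [hf, ← map_mul]

theorem sum_smul_eq_zero_of_sum_mul_character_eq_zero [Field k] [IsAlgClosed k] [CharZero k]
    [AddCommGroup V] [Module k V] [FiniteDimensional k V] (ρ : Representation k Γ V)
    [ρ.IsIrreducible] {f : Γ → k} (hf : ∀ g h : Γ, f (h * g * h⁻¹) = f g)
    (h : ∑ g, f g * ρ.character g = 0) : ∑ g, f g • ρ g = 0 := by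
  obtain ⟨c, hc⟩ :=
    (Representation.IsIrreducible.algebraMap_intertwiningMap_bijective_of_isAlgClosed
      (ρ := ρ)).surjective (intertwiningMapOfClassFun ρ f hf)
  have scalar : ∑ g, f g • ρ g = c • (1 : V →ₗ[k] V) :=
    (congrArg Representation.IntertwiningMap.toLinearMap hc).symm
  have trace_zero : c * (Module.finrank k V : k) = 0 := by
    rw [← LinearMap.trace_one, ← smul_eq_mul, ← map_smul, ← scalar, ← h, map_sum]
    simp [Representation.character]
  rcases mul_eq_zero.mp trace_zero with hc0 | hV
  · rw [scalar, hc0, zero_smul]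
  · have : Subsingleton V := Module.finrank_zero_iff.mp (Nat.cast_eq_zero.mp hV)
    exact Subsingleton.elim _ _

end Schur

section GroupAlgebraModules

variable {k Γ : Type*} (M : Type*) [Monoid Γ]

theorem asAlgebraHom_ofModule' [CommSemiring k] [AddCommMonoid M] [Module k M]
    [Module (MonoidAlgebra k Γ) M] [IsScalarTower k (MonoidAlgebra k Γ) M] :
    (Representation.ofModule' (k := k) (G := Γ) M).asAlgebraHom = Algebra.lsmul k k M :=
  (MonoidAlgebra.lift k (M →ₗ[k] M) Γ).apply_symm_apply _

theorem isIrreducible_ofModule' [Field k] [AddCommGroup M] [Module k M]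
    [Module (MonoidAlgebra k Γ) M] [IsScalarTower k (MonoidAlgebra k Γ) M]
    [IsSimpleModule (MonoidAlgebra k Γ) M] :
    (Representation.ofModule' (k := k) (G := Γ) M).IsIrreducible := by
  let ρ : Representation k Γ M := .ofModule' M
  let e : ρ.asModule ≃ₗ[MonoidAlgebra k Γ] M :=
    { ρ.asModuleEquiv.toAddEquiv with
      map_smul' := fun a x =>
        (ρ.asModuleEquiv_map_smul a x).trans (by rw [asAlgebraHom_ofModule']; rfl) }
  exact ρ.irreducible_iff_isSimpleModule_asModule.mpr (IsSimpleModule.congr e)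

end GroupAlgebraModules

section IrreducibleCharacters

theorem isIrrChar_character [Finite G] {V : Type} [AddCommGroup V] [Module ℂ V]
    [FiniteDimensional ℂ V] (ρ : Representation ℂ G V) [ρ.IsIrreducible] :
    IsIrrChar G ρ.character := by
  cases nonempty_fintype G
  have card_ne_zero : (Nat.card G : ℂ) ≠ 0 := NeZero.ne _
  let _ := invertibleOfNonzero card_ne_zero
  refine ⟨FDRep.of ρ, (FDRep.simple_iff_char_is_norm_one _).mpr ?_, rfl⟩
  have orthonormal := Representation.char_orthonormal ρ ρ
  rw [if_pos ⟨Representation.Equiv.refl ρ⟩, inv_mul_eq_one₀ card_ne_zero] at orthonormal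
  exact orthonormal.symm

theorem IsIrrChar.mem_classFunSubmodule {ρ : G → ℂ} (hρ : IsIrrChar G ρ) :
    ρ ∈ classFunSubmodule G := by
  obtain ⟨V, -, rfl⟩ := hρ
  exact V.char_conj

/-- The bilinear pairing `⟨f, ρ⟩ = ∑ g, f g * ρ g⁻¹`; on characters it is `#G` times the usual
scalar product. -/
def charPairing [Fintype G] : (G → ℂ) →ₗ[ℂ] (G → ℂ) →ₗ[ℂ] ℂ :=
  LinearMap.mk₂ ℂ (fun f ρ => ∑ g, f g * ρ g⁻¹)
    (fun _ _ _ => by simp [add_mul, Finset.sum_add_distrib])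
    (fun _ _ _ => by simp [mul_assoc, Finset.mul_sum])
    (fun _ _ _ => by simp [mul_add, Finset.sum_add_distrib])
    (fun _ _ _ => by simp [mul_left_comm, Finset.mul_sum])

theorem IsIrrChar.charPairing_self [Fintype G] {ρ : G → ℂ} (hρ : IsIrrChar G ρ) :
    charPairing ρ ρ = Nat.card G := by
  obtain ⟨V, hV, rfl⟩ := hρ
  exact (FDRep.simple_iff_char_is_norm_one V).mp hV

theorem IsIrrChar.charPairing_eq_zero [Fintype G] {ρ σ : G → ℂ} (hρ : IsIrrChar G ρ)
    (hσ : IsIrrChar G σ) (hne : ρ ≠ σ) : charPairing ρ σ = 0 := by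
  obtain ⟨V, hV, rfl⟩ := hρ
  obtain ⟨W, hW, rfl⟩ := hσ
  have card_ne_zero : (Nat.card G : ℂ) ≠ 0 := NeZero.ne _
  let _ := invertibleOfNonzero card_ne_zero
  have not_iso : ¬Nonempty (V ≅ W) := fun ⟨e⟩ => hne (FDRep.char_iso e)
  have orthonormal := FDRep.char_orthonormal V W
  rw [if_neg not_iso] at orthonormal
  exact (mul_eq_zero.mp orthonormal).resolve_left (inv_ne_zero card_ne_zero)

theorem sum_single_smul_eq_zero_of_isSimpleModule [Fintype G] {M : Type} [AddCommGroup M]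
    [Module ℂ M] [Module (MonoidAlgebra ℂ G) M] [IsScalarTower ℂ (MonoidAlgebra ℂ G) M]
    [IsSimpleModule (MonoidAlgebra ℂ G) M] {f : G → ℂ} (hf : f ∈ classFunSubmodule G)
    (h : ∀ ρ, IsIrrChar G ρ → ∑ g, f g * ρ g = 0) (x : M) :
    (∑ g, MonoidAlgebra.single g (f g)) • x = 0 := by
  let ρ : Representation ℂ G M := .ofModule' M
  have : ρ.IsIrreducible := isIrreducible_ofModule' M
  have : FiniteDimensional ℂ M := Module.Finite.trans (MonoidAlgebra ℂ G) M
  have acts_as_zero : ρ.asAlgebraHom (∑ g, MonoidAlgebra.single g (f g)) = 0 := by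
    simpa using sum_smul_eq_zero_of_sum_mul_character_eq_zero ρ hf (h _ (isIrrChar_character ρ))
  rw [asAlgebraHom_ofModule'] at acts_as_zero
  exact LinearMap.congr_fun acts_as_zero x

theorem eq_zero_of_sum_mul_isIrrChar_eq_zero [Fintype G] {f : G → ℂ}
    (hf : f ∈ classFunSubmodule G) (h : ∀ ρ, IsIrrChar G ρ → ∑ g, f g * ρ g = 0) : f = 0 := by
  let z : MonoidAlgebra ℂ G := ∑ g, MonoidAlgebra.single g (f g)
  have mem_jacobson : z ∈ Ring.jacobson (MonoidAlgebra ℂ G) := by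
    refine Submodule.mem_sInf.mpr fun m hm => ?_
    have : IsSimpleModule (MonoidAlgebra ℂ G) (MonoidAlgebra ℂ G ⧸ m) :=
      isSimpleModule_iff_isCoatom.mpr hm
    have kills_one : z • (Submodule.Quotient.mk 1 : MonoidAlgebra ℂ G ⧸ m) = 0 :=
      sum_single_smul_eq_zero_of_isSimpleModule hf h _
    rwa [← Submodule.Quotient.mk_smul, smul_eq_mul, mul_one,
      Submodule.Quotient.mk_eq_zero] at kills_one
  rw [IsSemisimpleRing.jacobson_eq_bot, Submodule.mem_bot] at mem_jacobson
  classical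
  ext g
  simpa [z, Finsupp.single_apply] using congrArg (fun w => w.coeff g) mem_jacobson

end IrreducibleCharacters

section DualAction

variable {N : Subgroup G} [N.Normal] {q : G} {χ ψ : (G ⧸ N) →* ℂˣ} {ρ ρ' : G → ℂ}

theorem charMul_one : charMul N 1 ρ = ρ := by
  ext g
  simp [charMul]

theorem charMul_mul : charMul N (χ * ψ) ρ = charMul N χ (charMul N ψ ρ) := by
  ext g
  simp [charMul, mul_assoc]

theorem charMul_apply_of_mem_coset {g : G} (hg : g ∈ coset N q) :
    charMul N χ ρ g = χ (q : G ⧸ N) * ρ g := by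
  rw [charMul, show (g : G ⧸ N) = q from hg]

theorem apply_eq_one_of_charMul_eq_self (hχ : charMul N χ ρ = ρ)
    (hne : ∃ g ∈ coset N q, ρ g ≠ 0) : χ (q : G ⧸ N) = 1 := by
  obtain ⟨g, hg, hρg⟩ := hne
  have := congrFun hχ g
  rw [charMul_apply_of_mem_coset hg] at this
  exact Units.ext (mul_eq_right₀ hρg |>.mp this)

theorem mem_qhatOrbit_self : ρ ∈ qhatOrbit N ρ :=
  ⟨1, charMul_one.symm⟩

theorem qhatOrbit_eq_of_mem (h : ρ' ∈ qhatOrbit N ρ) : qhatOrbit N ρ' = qhatOrbit N ρ := by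
  obtain ⟨χ, rfl⟩ := h
  ext σ
  constructor
  · rintro ⟨ψ, rfl⟩
    exact ⟨ψ * χ, charMul_mul.symm⟩
  · rintro ⟨ψ, rfl⟩
    refine ⟨ψ * χ⁻¹, ?_⟩
    ext g
    simp [charMul, mul_assoc]

theorem mem_Rset_iff {S : Set (G → ℂ)} :
    S ∈ Rset N q ↔ ∃ ρ, IsIrrChar G ρ ∧ S = qhatOrbit N ρ ∧ ∃ g ∈ coset N q, ρ g ≠ 0 := by
  constructor
  · rintro ⟨⟨ρ, hρ, rfl⟩, _, ⟨χ, rfl⟩, g, hg, hne⟩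
    exact ⟨ρ, hρ, rfl, g, hg, right_ne_zero_of_mul hne⟩
  · rintro ⟨ρ, hρ, rfl, hne⟩
    exact ⟨⟨ρ, hρ, rfl⟩, ρ, mem_qhatOrbit_self, hne⟩

/-- The representation `g ↦ χ g • ρ g`, that is, the tensor product of `ρ` with the
one-dimensional representation `χ`. -/
def representationTwist {k Γ V : Type*} [CommSemiring k] [Monoid Γ] [AddCommMonoid V] [Module k V]
    (χ : Γ →* kˣ) (ρ : Representation k Γ V) : Representation k Γ V where
  toFun g := (χ g : k) • ρ g
  map_one' := by simp
  map_mul' a b := by simp [smul_smul, mul_comm]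

theorem isIrrChar_charMul [Finite G] (hρ : IsIrrChar G ρ) (χ : (G ⧸ N) →* ℂˣ) :
    IsIrrChar G (charMul N χ ρ) := by
  cases nonempty_fintype G
  obtain ⟨V, hV, rfl⟩ := hρ
  let W := FDRep.of (representationTwist (χ.comp (QuotientGroup.mk' N)) V.ρ)
  have character_W : W.character = charMul N χ V.character := by
    ext g
    exact map_smul (LinearMap.trace ℂ V) _ _
  refine ⟨W, ?_, character_W.symm⟩
  rw [FDRep.simple_iff_char_is_norm_one] at hV ⊢
  rw [character_W, ← hV]
  refine Finset.sum_congr rfl fun g _ => ?_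
  simp [charMul, mul_mul_mul_comm _ (V.character g)]

end DualAction

section CosetRestriction

open scoped IsMulCommutative

variable {N : Subgroup G} [N.Normal] [IsMulCommutative (G ⧸ N)] {q r : G} {ρ σ f : G → ℂ}

theorem card_smul_indicator_coset [Finite (G ⧸ N)] [Fintype ((G ⧸ N) →* ℂˣ)] :
    (Fintype.card ((G ⧸ N) →* ℂˣ) : ℂ) • (coset N q).indicator f =
      ∑ χ : (G ⧸ N) →* ℂˣ, (χ (q : G ⧸ N) : ℂ)⁻¹ • charMul N χ f := by
  classical
  ext g
  have fourier := sum_monoidHom_units_apply (R := ℂ) ((q : G ⧸ N)⁻¹ * g)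
  simp only [map_mul, map_inv, Units.val_mul, Units.val_inv_eq_inv_val] at fourier
  simp only [Pi.smul_apply, Finset.sum_apply, smul_eq_mul, charMul, ← mul_assoc,
    ← Finset.sum_mul, fourier, inv_mul_eq_one, Set.indicator_apply, coset, Set.mem_ofPred_eq,
    eq_comm (a := (g : G ⧸ N))]
  split_ifs <;> simp

theorem card_mul_charPairing_indicator_coset [Fintype G] [Fintype ((G ⧸ N) →* ℂˣ)] :
    Fintype.card ((G ⧸ N) →* ℂˣ) * charPairing ((coset N q).indicator f) σ =
      ∑ χ : (G ⧸ N) →* ℂˣ, (χ (q : G ⧸ N) : ℂ)⁻¹ * charPairing (charMul N χ f) σ := by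
  simpa using congrArg (charPairing · σ) (card_smul_indicator_coset (q := q) (f := f))

theorem IsIrrChar.charPairing_indicator_coset_eq_zero [Fintype G] (hρ : IsIrrChar G ρ)
    (hσ : IsIrrChar G σ) (h : σ ∉ qhatOrbit N ρ) :
    charPairing ((coset N q).indicator ρ) σ = 0 := by
  have := Fintype.ofFinite ((G ⧸ N) →* ℂˣ)
  have summand_eq_zero (χ : (G ⧸ N) →* ℂˣ) :
      (χ (q : G ⧸ N) : ℂ)⁻¹ * charPairing (charMul N χ ρ) σ = 0 := by
    rw [(isIrrChar_charMul hρ χ).charPairing_eq_zero hσ fun h' => h ⟨χ, h'.symm⟩, mul_zero]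
  have card_mul := card_mul_charPairing_indicator_coset (q := q) (f := ρ) (σ := σ) (N := N)
  rw [Finset.sum_eq_zero fun χ _ => summand_eq_zero χ] at card_mul
  exact (mul_eq_zero.mp card_mul).resolve_left (Nat.cast_ne_zero.mpr Fintype.card_ne_zero)

theorem IsIrrChar.charPairing_indicator_coset_self_ne_zero [Fintype G] (hρ : IsIrrChar G ρ)
    (h : ∀ χ : (G ⧸ N) →* ℂˣ, charMul N χ ρ = ρ → χ (q : G ⧸ N) = 1) :
    charPairing ((coset N q).indicator ρ) ρ ≠ 0 := by
  classical
  have := Fintype.ofFinite ((G ⧸ N) →* ℂˣ)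
  have summand (χ : (G ⧸ N) →* ℂˣ) :
      (χ (q : G ⧸ N) : ℂ)⁻¹ * charPairing (charMul N χ ρ) ρ =
        if charMul N χ ρ = ρ then (Nat.card G : ℂ) else 0 := by
    split_ifs with hχ
    · simp [h χ hχ, hχ, hρ.charPairing_self]
    · rw [(isIrrChar_charMul hρ χ).charPairing_eq_zero hρ hχ, mul_zero]
  have card_mul := card_mul_charPairing_indicator_coset (q := q) (f := ρ) (σ := ρ) (N := N)
  simp only [summand, ← Finset.sum_filter, Finset.sum_const, nsmul_eq_mul] at card_mul
  have one_mem : (1 : (G ⧸ N) →* ℂˣ) ∈ Finset.univ.filter (charMul N · ρ = ρ) := by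
    simp [charMul_one]
  refine right_ne_zero_of_mul (card_mul.trans_ne (mul_ne_zero ?_ (NeZero.ne _)))
  exact Nat.cast_ne_zero.mpr (Finset.card_ne_zero_of_mem one_mem)

theorem IsIrrChar.exists_mem_coset_ne_zero_iff [Finite G] (hρ : IsIrrChar G ρ) :
    (∃ g ∈ coset N q, ρ g ≠ 0) ↔
      ∀ χ : (G ⧸ N) →* ℂˣ, charMul N χ ρ = ρ → χ (q : G ⧸ N) = 1 := by
  cases nonempty_fintype G
  refine ⟨fun hne χ hχ => apply_eq_one_of_charMul_eq_self hχ hne, fun h => ?_⟩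
  by_contra! vanishes
  apply hρ.charPairing_indicator_coset_self_ne_zero h
  rw [Set.indicator_eq_zero'.mpr, map_zero, LinearMap.zero_apply]
  exact (Function.disjoint_support_iff.mpr vanishes).symm

theorem Rset_subset_of_mem_zpowers [Finite G]
    (hr : (r : G ⧸ N) ∈ Subgroup.zpowers (q : G ⧸ N)) : Rset N q ⊆ Rset N r := by
  intro S hS
  obtain ⟨ρ, hρ, rfl, hne⟩ := mem_Rset_iff.mp hS
  refine mem_Rset_iff.mpr ⟨ρ, hρ, rfl, hρ.exists_mem_coset_ne_zero_iff.mpr fun χ hχ => ?_⟩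
  obtain ⟨n, hn : (q : G ⧸ N) ^ n = r⟩ := hr
  rw [← hn, map_zpow, hρ.exists_mem_coset_ne_zero_iff.mp hne χ hχ, one_zpow]

end CosetRestriction

section CosetClassFunctions

variable {N : Subgroup G} [N.Normal] {q : G} {f ρ : G → ℂ}

theorem sum_mul_charMul_of_mem_cosetClassFun [Fintype G] (hf : f ∈ cosetClassFun N q)
    (χ : (G ⧸ N) →* ℂˣ) :
    ∑ g, f g * charMul N χ ρ g = χ (q : G ⧸ N) * ∑ g, f g * ρ g := by
  rw [Finset.mul_sum]
  refine Finset.sum_congr rfl fun g _ => ?_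
  by_cases hg : g ∈ coset N q
  · rw [charMul_apply_of_mem_coset hg, mul_left_comm]
  · simp [hf.2 g hg]

theorem sum_mul_eq_zero_of_mem_cosetClassFun [Fintype G] (hf : f ∈ cosetClassFun N q)
    (hρ : ∀ g ∈ coset N q, ρ g = 0) : ∑ g, f g * ρ g = 0 := by
  refine Finset.sum_eq_zero fun g _ => ?_
  by_cases hg : g ∈ coset N q
  · rw [hρ g hg, mul_zero]
  · rw [hf.2 g hg, zero_mul]

theorem eq_zero_of_mem_cosetClassFun [Fintype G] {ι : Type*} {ρ : ι → G → ℂ}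
    (hρ : ∀ σ, IsIrrChar G σ → (∃ g ∈ coset N q, σ g ≠ 0) → ∃ i, σ ∈ qhatOrbit N (ρ i))
    (hf : f ∈ cosetClassFun N q) (h : ∀ i, ∑ g, f g * ρ i g = 0) : f = 0 := by
  refine eq_zero_of_sum_mul_isIrrChar_eq_zero hf.1 fun σ hσ => ?_
  by_cases hne : ∃ g ∈ coset N q, σ g ≠ 0
  · obtain ⟨i, χ, rfl⟩ := hρ σ hσ hne
    rw [sum_mul_charMul_of_mem_cosetClassFun hf, h, mul_zero]
  · exact sum_mul_eq_zero_of_mem_cosetClassFun hf (by simpa using hne)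

theorem finrank_cosetClassFun_le_card [Finite G] {ι : Type*} [Fintype ι] {ρ : ι → G → ℂ}
    (hρ : ∀ σ, IsIrrChar G σ → (∃ g ∈ coset N q, σ g ≠ 0) → ∃ i, σ ∈ qhatOrbit N (ρ i)) :
    Module.finrank ℂ (cosetClassFun N q) ≤ Fintype.card ι := by
  cases nonempty_fintype G
  let pairings : cosetClassFun N q →ₗ[ℂ] ι → ℂ :=
    (Matrix.of ρ).mulVecLin ∘ₗ (cosetClassFun N q).subtype
  have injective : Function.Injective pairings := by
    refine (injective_iff_map_eq_zero _).mpr fun f hf => Subtype.ext ?_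
    refine eq_zero_of_mem_cosetClassFun hρ f.2 fun i => ?_
    exact (Finset.sum_congr rfl fun g _ => mul_comm _ _).trans (congrFun hf i)
  rw [← Module.finrank_fintype_fun_eq_card ℂ]
  exact LinearMap.finrank_le_finrank_of_injective injective

/-- Functions on `C_q`, extended by zero to all conjugacy classes and pulled back to `G`. -/
noncomputable def classFunOfCset (N : Subgroup G) [N.Normal] (q : G) :
    (Cset N q → ℂ) →ₗ[ℂ] (G → ℂ) :=
  LinearMap.funLeft ℂ ℂ ConjClasses.mk ∘ₗ Function.ExtendByZero.linearMap ℂ Subtype.val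

theorem classFunOfCset_injective : Function.Injective (classFunOfCset N q) :=
  (LinearMap.funLeft_injective_of_surjective ℂ ℂ _ ConjClasses.mk_surjective).comp
    (Function.extend_injective Subtype.val_injective (0 : ConjClasses G → ℂ))

theorem classFunOfCset_apply_of_notMem (φ : Cset N q → ℂ) {g : G} (hg : g ∉ coset N q) :
    classFunOfCset N q φ g = 0 := by
  refine Function.extend_apply' _ _ _ ?_
  rintro ⟨⟨c, hc⟩, rfl⟩
  exact hg (hc ConjClasses.mem_carrier_mk)

variable [IsMulCommutative (G ⧸ N)]

theorem conj_mem_coset_iff {g h : G} : h * g * h⁻¹ ∈ coset N q ↔ g ∈ coset N q := by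
  open scoped IsMulCommutative in
  simp [coset]

theorem indicator_coset_mem_cosetClassFun (hf : f ∈ classFunSubmodule G) :
    (coset N q).indicator f ∈ cosetClassFun N q := by
  classical
  refine ⟨fun g h => ?_, fun g hg => Set.indicator_of_notMem hg f⟩
  simp only [Set.indicator_apply, conj_mem_coset_iff, hf g h]

theorem mk_mem_Cset_iff {g : G} : ConjClasses.mk g ∈ Cset N q ↔ g ∈ coset N q := by
  refine ⟨fun h => h ConjClasses.mem_carrier_mk, fun hg x hx => ?_⟩
  obtain ⟨c, rfl⟩ := isConj_iff.mp (ConjClasses.mk_eq_mk_iff_isConj.mp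
    (ConjClasses.mem_carrier_iff_mk_eq.mp hx).symm)
  exact conj_mem_coset_iff.mpr hg

theorem range_classFunOfCset : LinearMap.range (classFunOfCset N q) = cosetClassFun N q := by
  ext f
  constructor
  · rintro ⟨φ, rfl⟩
    refine ⟨fun g h => ?_, fun g hg => ?_⟩
    · exact congrArg (Function.extend Subtype.val φ 0)
        (ConjClasses.mk_eq_mk_iff_isConj.mpr (isConj_iff.mpr ⟨h, rfl⟩)).symm
    · exact classFunOfCset_apply_of_notMem φ hg
  · intro hf
    let F : ConjClasses G → ℂ := Quotient.lift f fun a b hab => by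
      obtain ⟨h, rfl⟩ := isConj_iff.mp hab
      exact (hf.1 a h).symm
    refine ⟨F ∘ Subtype.val, funext fun g => ?_⟩
    by_cases hg : g ∈ coset N q
    · exact Subtype.val_injective.extend_apply _ _ (⟨_, mk_mem_Cset_iff.mpr hg⟩ : Cset N q)
    · rw [hf.2 g hg, classFunOfCset_apply_of_notMem _ hg]

theorem finrank_cosetClassFun_eq_ncard_Cset [Finite G] :
    Module.finrank ℂ (cosetClassFun N q) = (Cset N q).ncard := by
  have := Fintype.ofFinite (Cset N q)
  rw [← range_classFunOfCset, LinearMap.finrank_range_of_inj classFunOfCset_injective,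
    Module.finrank_fintype_fun_eq_card, ← Nat.card_eq_fintype_card, Nat.card_coe_set_eq]

theorem linearIndependent_indicator_coset [Finite G] {ι : Type*} {ρ : ι → G → ℂ}
    (hρ : ∀ i, IsIrrChar G (ρ i)) (hne : ∀ i, ∃ g ∈ coset N q, ρ i g ≠ 0)
    (hinj : Function.Injective fun i => qhatOrbit N (ρ i)) :
    LinearIndependent ℂ fun i => (coset N q).indicator (ρ i) := by
  cases nonempty_fintype G
  have self_ne_zero (i : ι) : charPairing ((coset N q).indicator (ρ i)) (ρ i) ≠ 0 :=
    (hρ i).charPairing_indicator_coset_self_ne_zero ((hρ i).exists_mem_coset_ne_zero_iff.mp (hne i))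
  refine .of_pairwise_dual_eq_zero_one _
    (fun i => (charPairing ((coset N q).indicator (ρ i)) (ρ i))⁻¹ • charPairing.flip (ρ i))
    (fun i j hij => ?_) fun i => inv_mul_cancel₀ (self_ne_zero i)
  have notMem : ρ i ∉ qhatOrbit N (ρ j) := fun h => hij (hinj (qhatOrbit_eq_of_mem h))
  simp [(hρ j).charPairing_indicator_coset_eq_zero (hρ i) notMem]

theorem nonempty_basis_Rset_cosetClassFun [Finite G] :
    Nonempty (Module.Basis (Rset N q) ℂ (cosetClassFun N q)) := by
  choose rep isIrrChar_rep orbit_rep rep_ne_zero using fun S : Rset N q => mem_Rset_iff.mp S.2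
  let v (S : Rset N q) : cosetClassFun N q :=
    ⟨_, indicator_coset_mem_cosetClassFun (isIrrChar_rep S).mem_classFunSubmodule⟩
  have linearIndependent : LinearIndependent ℂ v := by
    refine .of_comp (cosetClassFun N q).subtype (linearIndependent_indicator_coset
      isIrrChar_rep rep_ne_zero fun S T h => Subtype.ext ?_)
    exact (orbit_rep S).trans (h.trans (orbit_rep T).symm)
  have : Finite (Rset N q) := linearIndependent.finite
  have := Fintype.ofFinite (Rset N q)
  have finrank_le : Module.finrank ℂ (cosetClassFun N q) ≤ Fintype.card (Rset N q) := by
    refine finrank_cosetClassFun_le_card (ρ := rep) fun σ hσ hne => ?_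
    let S : Rset N q := ⟨_, mem_Rset_iff.mpr ⟨σ, hσ, rfl, hne⟩⟩
    exact ⟨S, orbit_rep S ▸ mem_qhatOrbit_self⟩
  have card_eq := linearIndependent.fintype_card_le_finrank.antisymm finrank_le
  exact ⟨basisOfLinearIndependentOfCardEqFinrank' v linearIndependent card_eq⟩

theorem Rset_finite [Finite G] : (Rset N q).Finite :=
  let ⟨b⟩ := nonempty_basis_Rset_cosetClassFun (N := N) (q := q)
  Module.Finite.finite_basis b

theorem ncard_Cset_eq_ncard_Rset [Finite G] : (Cset N q).ncard = (Rset N q).ncard := by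
  obtain ⟨b⟩ := nonempty_basis_Rset_cosetClassFun (N := N) (q := q)
  rw [← finrank_cosetClassFun_eq_ncard_Cset, Module.finrank_eq_nat_card_basis b,
    Nat.card_coe_set_eq]

end CosetClassFunctions

/-- `R_q ⊆ R_{q^k}` and `#C_q ≤ #C_{q^k}` for all `k ≥ 1`. -/
theorem Rset_subset_pow_and_Cset_card_le
    (G : Type) [Group G] [Fintype G] (N : Subgroup G) [N.Normal]
    (hQ : ∀ a b : G ⧸ N, a * b = b * a) (q : G) (k : ℕ) (hk : 1 ≤ k) :
    Rset N q ⊆ Rset N (q ^ k) ∧ (Cset N q).ncard ≤ (Cset N (q ^ k)).ncard := by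
  have : IsMulCommutative (G ⧸ N) := ⟨⟨hQ⟩⟩
  have subset : Rset N q ⊆ Rset N (q ^ k) := Rset_subset_of_mem_zpowers ⟨k, by simp⟩
  refine ⟨subset, ?_⟩
  rw [ncard_Cset_eq_ncard_Rset, ncard_Cset_eq_ncard_Rset]
  exact Set.ncard_le_ncard subset Rset_finite
end

section
/- Let G be a finite group and N a normal subgroup with Q = G/N cyclic. Suppose τ is an irreducible complex character of N and ρ is an irreducible complex character of G with Res_N ρ = τ. Then the set of irreducible characters ρ' of G with Res_N ρ' = τ is exactly the Q̂-orbit of ρ under the tensoring action, and hence has exactly (G:N) elements. -/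
open scoped BigOperators

variable {G : Type} [Group G]

/-!
The image of `k[N]` under an irreducible representation over an algebraically closed field is the
full endomorphism algebra (Burnside), on which the trace form is nondegenerate. Hence the character
determines the kernel of `k[N] → End V`, and therefore, by Skolem–Noether, the representation.
So if two characters of `G` restrict to the same irreducible character of `N`, they come from
representations `ρ`, `σ` of `G` on one space that agree on `N`; then `ρ g⁻¹ * σ g` commutes with
`N`, and by Schur's lemma it is a scalar `χ g`, which defines `χ ∈ Q̂` with `σ = χ ⊗ ρ`.
Nondegeneracy of the trace form also shows that `ρ.character` is nonzero somewhere on each coset of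
`N`, so that `Q̂` acts freely on the orbit of `ρ.character`.
-/

open Representation
open scoped MonoidAlgebra

section TracesOfAlgebraHoms

theorem exists_algEquiv_of_ker_eq {R A B C : Type*} [CommSemiring R] [Ring A] [Algebra R A]
    [Semiring B] [Algebra R B] [Semiring C] [Algebra R C] {f : A →ₐ[R] B} {g : A →ₐ[R] C}
    (hf : Function.Surjective f) (hg : Function.Surjective g)
    (h : RingHom.ker f = RingHom.ker g) : ∃ e : B ≃ₐ[R] C, ∀ a, e (f a) = g a := by
  refine ⟨(Ideal.quotientKerAlgEquivOfSurjective hf).symm.trans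
    ((Ideal.quotientEquivAlgOfEq R h).trans (Ideal.quotientKerAlgEquivOfSurjective hg)),
    fun a => ?_⟩
  simp

theorem eq_zero_of_forall_trace_mul_eq_zero {R M : Type*} [CommRing R] [AddCommGroup M]
    [Module R M] [Module.Free R M] [Module.Finite R M] {f : Module.End R M}
    (h : ∀ g : Module.End R M, LinearMap.trace R M (f * g) = 0) : f = 0 := by
  refine LinearMap.ext fun v => (Module.forall_dual_apply_eq_zero_iff R _).mp fun φ => ?_
  calc φ (f v) = LinearMap.trace R M (φ.smulRight (f v)) := (LinearMap.trace_smulRight φ _).symm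
    _ = LinearMap.trace R M (f * φ.smulRight v) :=
        congrArg _ (LinearMap.ext fun w => (map_smul f (φ w) v).symm)
    _ = 0 := h _

theorem ker_le_ker_of_trace_eq {R A V W : Type*} [CommRing R] [Ring A] [Algebra R A]
    [AddCommGroup V] [Module R V] [Module.Free R V] [Module.Finite R V] [AddCommGroup W]
    [Module R W] {f : A →ₐ[R] Module.End R V} {g : A →ₐ[R] Module.End R W}
    (hf : Function.Surjective f)
    (h : ∀ a, LinearMap.trace R V (f a) = LinearMap.trace R W (g a)) :
    RingHom.ker g ≤ RingHom.ker f := by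
  intro a (ha : g a = 0)
  refine eq_zero_of_forall_trace_mul_eq_zero fun x => ?_
  obtain ⟨b, rfl⟩ := hf x
  rw [← map_mul, h, map_mul, ha, zero_mul, map_zero]

variable {k A V W : Type*} [Field k] [CharZero k] [Ring A] [Algebra k A]
  [AddCommGroup V] [Module k V] [FiniteDimensional k V]
  [AddCommGroup W] [Module k W] [FiniteDimensional k W]
  {f : A →ₐ[k] Module.End k V} {g : A →ₐ[k] Module.End k W}

theorem surjective_of_trace_eq (hf : Function.Surjective f)
    (h : ∀ a, LinearMap.trace k V (f a) = LinearMap.trace k W (g a)) : Function.Surjective g := by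
  have hfinrank : Module.finrank k V = Module.finrank k W := by
    simpa only [map_one, LinearMap.trace_one, Nat.cast_inj] using h 1
  obtain ⟨s, hs⟩ := f.toLinearMap.exists_rightInverse_of_surjective (LinearMap.range_eq_top.mpr hf)
  have hinj : Function.Injective (g.toLinearMap ∘ₗ s) := by
    refine (injective_iff_map_eq_zero _).mpr fun x hx => ?_
    rw [← LinearMap.id_apply (R := k) x, ← hs]
    exact ker_le_ker_of_trace_eq hf h hx
  have hsurj : Function.Surjective (g.toLinearMap ∘ₗ s) :=
    (LinearMap.injective_iff_surjective_of_finrank_eq_finrank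
      (by simp only [Module.finrank_linearMap, hfinrank])).mp hinj
  exact Function.Surjective.of_comp (g := s) hsurj

theorem exists_linearEquiv_conj_of_trace_eq (hf : Function.Surjective f)
    (h : ∀ a, LinearMap.trace k V (f a) = LinearMap.trace k W (g a)) :
    ∃ e : V ≃ₗ[k] W, ∀ a, e.conj (f a) = g a := by
  have hg := surjective_of_trace_eq hf h
  obtain ⟨F, hF⟩ := exists_algEquiv_of_ker_eq hf hg <|
    (ker_le_ker_of_trace_eq hg fun a => (h a).symm).antisymm (ker_le_ker_of_trace_eq hf h)
  obtain ⟨e, rfl⟩ := F.eq_linearEquivConjAlgEquiv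
  exact ⟨e, hF⟩

end TracesOfAlgebraHoms

section Irreducible

variable {k H V W : Type*} [Field k] [Monoid H] [AddCommGroup V] [Module k V]
  [AddCommGroup W] [Module k W] {ρ : Representation k H V} {σ : Representation k H W}

theorem isIrreducible_of_comp {K : Type*} [Monoid K] (φ : K →* H) [IsIrreducible (ρ.comp φ)] :
    IsIrreducible ρ := by
  let restrict (S : Subrepresentation ρ) : Subrepresentation (ρ.comp φ) :=
    ⟨S.toSubmodule, fun g => S.apply_mem_toSubmodule (φ g)⟩
  have hrestrict {S T} (h : restrict S = restrict T) : S = T :=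
    Subrepresentation.toSubmodule_injective (congrArg Subrepresentation.toSubmodule h :)
  exact
    { exists_pair_ne := ⟨⊥, ⊤, fun h => bot_ne_top (congrArg restrict h)⟩
      eq_bot_or_eq_top S := (eq_bot_or_eq_top (restrict S)).imp hrestrict hrestrict }

theorem isIrreducible_of_equiv [hρ : IsIrreducible ρ] (e : ρ.Equiv σ) : IsIrreducible σ := by
  rw [irreducible_iff_isSimpleModule_asModule] at hρ ⊢
  exact IsSimpleModule.congr <| LinearEquiv.ofBijective
    (IntertwiningMap.equivLinearMapAsModule σ ρ e.symm.toIntertwiningMap)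
    e.symm.toLinearEquiv.bijective

theorem nontrivial_of_isIrreducible (ρ : Representation k H V) [IsIrreducible ρ] : Nontrivial V :=
  IsSimpleModule.nontrivial k[H] ρ.asModule

theorem trace_asAlgebraHom_eq_of_character_eq (h : ρ.character = σ.character) (a : k[H]) :
    LinearMap.trace k V (ρ.asAlgebraHom a) = LinearMap.trace k W (σ.asAlgebraHom a) := by
  have hext : LinearMap.trace k V ∘ₗ ρ.asAlgebraHom.toLinearMap =
      LinearMap.trace k W ∘ₗ σ.asAlgebraHom.toLinearMap := by
    ext g
    simpa [character] using congrFun h g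
  exact congr($hext a)

variable [IsAlgClosed k] [FiniteDimensional k V]

theorem exists_smul_one_of_commute [IsIrreducible ρ] {f : Module.End k V}
    (h : ∀ g, Commute f (ρ g)) : ∃ c : k, f = c • 1 := by
  obtain ⟨c, hc⟩ :=
    (IsIrreducible.algebraMap_intertwiningMap_bijective_of_isAlgClosed (ρ := ρ)).surjective ⟨f, h⟩
  exact ⟨c, congrArg IntertwiningMap.toLinearMap hc.symm⟩

theorem asAlgebraHom_surjective [IsIrreducible ρ] : Function.Surjective ρ.asAlgebraHom := by
  intro f
  have : FiniteDimensional k ρ.asModule := inferInstanceAs (FiniteDimensional k V)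
  have : Module.Finite (Module.End k[H] ρ.asModule) ρ.asModule :=
    Module.Finite.of_restrictScalars_finite k _ _
  have hend :=
    IsSimpleModule.algebraMap_end_bijective_of_isAlgClosed (A := k[H]) (V := ρ.asModule) k
  obtain ⟨a, ha⟩ := Module.Finite.toModuleEnd_moduleEnd_surjective (R := k[H]) (M := ρ.asModule)
    { toFun := f
      map_add' := map_add f
      map_smul' φ v := by
        obtain ⟨c, rfl⟩ := hend.surjective φ
        exact map_smul f c v }
  exact ⟨a, LinearMap.ext fun v => congr($ha v)⟩

theorem eq_zero_of_forall_trace_mul_apply_eq_zero [IsIrreducible ρ] {f : Module.End k V}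
    (h : ∀ g, LinearMap.trace k V (f * ρ g) = 0) : f = 0 := by
  refine eq_zero_of_forall_trace_mul_eq_zero fun x => ?_
  obtain ⟨a, rfl⟩ := asAlgebraHom_surjective (ρ := ρ) x
  have hext :
      LinearMap.trace k V ∘ₗ LinearMap.mulLeft k f ∘ₗ ρ.asAlgebraHom.toLinearMap = 0 := by
    ext g
    simpa using h g
  exact congr($hext a)

theorem nonempty_equiv_of_character_eq [CharZero k] [FiniteDimensional k W] [IsIrreducible ρ]
    (h : ρ.character = σ.character) : Nonempty (ρ.Equiv σ) := by
  obtain ⟨e, he⟩ := exists_linearEquiv_conj_of_trace_eq asAlgebraHom_surjective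
    (trace_asAlgebraHom_eq_of_character_eq h)
  refine ⟨.mk e fun g => LinearMap.ext fun v => ?_⟩
  simpa [asAlgebraHom_of] using congr($(he (MonoidAlgebra.of k H g)) (e v))

end Irreducible

section FDRepSimple

open CategoryTheory

universe u v

variable {k : Type u} {H : Type v} [Field k] [Monoid H]

/-- Morphisms of `FDRep k H` are the intertwining maps of the underlying representations; this
translates between simplicity in the category `FDRep k H` and `Representation.IsIrreducible`. -/
noncomputable def homLinearEquivIntertwiningMap (V W : FDRep k H) :
    (V ⟶ W) ≃ₗ[k] IntertwiningMap V.ρ W.ρ :=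
  (FDRep.forget₂HomLinearEquiv V W).symm.trans (Rep.homLinearEquiv _ _)

theorem mono_iff_injective_intertwiningMap {V W : FDRep k H} (f : V ⟶ W) :
    Mono f ↔ Function.Injective (homLinearEquivIntertwiningMap V W f) := by
  rw [← (forget₂ (FDRep k H) (Rep k H)).mono_map_iff_mono, Rep.mono_iff_injective]
  rfl

theorem epi_iff_surjective_intertwiningMap {V W : FDRep k H} (f : V ⟶ W) :
    Epi f ↔ Function.Surjective (homLinearEquivIntertwiningMap V W f) := by
  rw [← (forget₂ (FDRep k H) (Rep k H)).epi_map_iff_epi, Rep.epi_iff_surjective]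
  rfl

theorem isIrreducible_of_simple (V : FDRep k H) [Simple V] : IsIrreducible V.ρ where
  exists_pair_ne := ⟨⊥, ⊤, fun h => id_nonzero V <| by
    refine (homLinearEquivIntertwiningMap V V).injective <|
      IntertwiningMap.ext <| LinearMap.ext fun v => ?_
    have hv : v ∈ (⊥ : Subrepresentation V.ρ) := h ▸ Submodule.mem_top (R := k)
    exact (Submodule.mem_bot k).mp hv⟩
  eq_bot_or_eq_top S := by
    let i : IntertwiningMap (FDRep.of S.toRepresentation).ρ V.ρ :=
      ⟨S.toSubmodule.subtype, fun _ => rfl⟩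
    obtain ⟨f, hf⟩ := (homLinearEquivIntertwiningMap _ V).surjective i
    have : Mono f := by
      rw [mono_iff_injective_intertwiningMap, hf]
      exact S.toSubmodule.subtype_injective
    rcases eq_or_ne f 0 with rfl | hne
    · left
      refine Subrepresentation.toSubmodule_injective <| (Submodule.eq_bot_iff _).mpr fun v hv => ?_
      have hi : i = 0 := hf ▸ map_zero _
      exact congr($hi ⟨v, hv⟩)
    · right
      have := isIso_of_mono_of_nonzero hne
      have hsurj : Function.Surjective i :=
        hf ▸ (epi_iff_surjective_intertwiningMap f).mp inferInstance
      refine Subrepresentation.toSubmodule_injective <| Submodule.eq_top_iff'.mpr fun v => ?_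
      obtain ⟨w, rfl⟩ := hsurj v
      exact w.2

theorem simple_of_isIrreducible (V : FDRep k H) [IsIrreducible V.ρ] : Simple V where
  mono_isIso_iff_nonzero {W} f hf := by
    rw [isIso_iff_mono_and_epi, epi_iff_surjective_intertwiningMap,
      ← (homLinearEquivIntertwiningMap W V).map_ne_zero_iff]
    refine ⟨?_, fun hne => ⟨hf, (IsIrreducible.surjective_or_eq_zero _).resolve_right hne⟩⟩
    rintro ⟨-, hsurj⟩ h0
    have := nontrivial_of_isIrreducible V.ρ
    obtain ⟨v, hv⟩ := exists_ne (0 : V)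
    obtain ⟨w, rfl⟩ := hsurj v
    exact hv congr($h0 w)

end FDRepSimple

section Twist

/-- The tensor product of `ρ` with the one-dimensional representation `χ`, realised on the space
of `ρ` itself so that twists of `ρ` can be compared with other representations on that space. -/
def twist {R H M : Type*} [CommSemiring R] [Monoid H] [AddCommMonoid M] [Module R M]
    (χ : H →* Rˣ) (ρ : Representation R H M) : Representation R H M where
  toFun g := (χ g : R) • ρ g
  map_one' := by simp only [map_one, Units.val_one, one_smul]
  map_mul' g h := by simp only [map_mul, Units.val_mul, smul_mul_smul_comm]

theorem character_twist {k H V : Type*} [Field k] [Monoid H] [AddCommGroup V] [Module k V]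
    (χ : H →* kˣ) (ρ : Representation k H V) (g : H) :
    (twist χ ρ).character g = χ g * ρ.character g :=
  map_smul (LinearMap.trace k V) (χ g : k) (ρ g)

section NormalSubgroup

variable {R H M : Type*} [CommSemiring R] [Group H] [AddCommMonoid M] [Module R M]
  {N : Subgroup H} [N.Normal]

theorem twist_mk_comp_subtype (χ : (H ⧸ N) →* Rˣ) (ρ : Representation R H M) :
    (twist (χ.comp (QuotientGroup.mk' N)) ρ).comp N.subtype = ρ.comp N.subtype := by
  ext n : 1
  have hn : ((n : H) : H ⧸ N) = 1 := (QuotientGroup.eq_one_iff _).mpr n.2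
  simp [twist, hn]

theorem commute_of_comp_subtype_eq {ρ σ : Representation R H M}
    (h : σ.comp N.subtype = ρ.comp N.subtype) (g : H) (n : N) : Commute (ρ g⁻¹ * σ g) (ρ n) := by
  have hagree (n : N) : σ n = ρ n := congr($h n)
  have hconj : σ (g * n * g⁻¹) = ρ (g * n * g⁻¹) :=
    hagree ⟨_, ‹N.Normal›.conj_mem n n.2 g⟩
  calc ρ g⁻¹ * σ g * ρ n = ρ g⁻¹ * σ (g * n) := by rw [mul_assoc, ← hagree, ← map_mul]
    _ = ρ g⁻¹ * (σ (g * n * g⁻¹) * σ g) := by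
        rw [← map_mul σ, inv_mul_cancel_right]
    _ = ρ (g⁻¹ * (g * n * g⁻¹)) * σ g := by rw [hconj, ← mul_assoc, ← map_mul]
    _ = ρ (n * g⁻¹) * σ g := by rw [mul_assoc g, inv_mul_cancel_left]
    _ = ρ n * (ρ g⁻¹ * σ g) := by rw [map_mul, mul_assoc]

end NormalSubgroup

variable {k H V W : Type*} [Field k] [Group H] [AddCommGroup V] [Module k V]
  [AddCommGroup W] [Module k W] {N : Subgroup H}

theorem isIrreducible_twist_mk [N.Normal] (χ : (H ⧸ N) →* kˣ) (ρ : Representation k H V)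
    [hρ : IsIrreducible (ρ.comp N.subtype)] :
    IsIrreducible (twist (χ.comp (QuotientGroup.mk' N)) ρ) := by
  rw [← twist_mk_comp_subtype χ] at hρ
  exact isIrreducible_of_comp N.subtype

variable [IsAlgClosed k] [FiniteDimensional k V] {ρ : Representation k H V}
  [IsIrreducible (ρ.comp N.subtype)]

theorem exists_character_mul_ne_zero (g : H) : ∃ n : N, ρ.character (g * n) ≠ 0 := by
  have := nontrivial_of_isIrreducible (ρ.comp N.subtype)
  by_contra! h
  refine ((Group.isUnit g).map ρ).ne_zero <|
    eq_zero_of_forall_trace_mul_apply_eq_zero (ρ := ρ.comp N.subtype) fun n => ?_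
  rw [← h n, character, map_mul ρ]
  rfl

variable [N.Normal]

theorem exists_smul_apply_eq_of_comp_subtype_eq {σ : Representation k H V}
    (h : σ.comp N.subtype = ρ.comp N.subtype) (g : H) : ∃ c : k, c • ρ g = σ g := by
  obtain ⟨c, hc⟩ := exists_smul_one_of_commute (ρ := ρ.comp N.subtype)
    (commute_of_comp_subtype_eq h g)
  refine ⟨c, ?_⟩
  rw [← mul_smul_one, ← hc, ← mul_assoc, ← map_mul, mul_inv_cancel, map_one, one_mul]

theorem exists_eq_twist_mk {σ : Representation k H V}
    (h : σ.comp N.subtype = ρ.comp N.subtype) :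
    ∃ χ : (H ⧸ N) →* kˣ, σ = twist (χ.comp (QuotientGroup.mk' N)) ρ := by
  have := nontrivial_of_isIrreducible (ρ.comp N.subtype)
  have hinj (g : H) : Function.Injective fun c : k => c • ρ g :=
    smul_left_injective k ((Group.isUnit g).map ρ).ne_zero
  choose c hc using exists_smul_apply_eq_of_comp_subtype_eq h
  let χ : H →* k :=
    { toFun := c
      map_one' := hinj 1 ((hc 1).trans (by simp only [map_one, one_smul]))
      map_mul' a b := hinj (a * b) <|
        (hc (a * b)).trans (by simp only [map_mul, ← hc a, ← hc b, smul_mul_smul_comm]) }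
  have hker : N ≤ χ.toHomUnits.ker := fun n hn =>
    Units.ext <| hinj n <| (hc n).trans <| (congr($h ⟨n, hn⟩)).trans (one_smul k _).symm
  exact ⟨QuotientGroup.lift N χ.toHomUnits hker, MonoidHom.ext fun g => (hc g).symm⟩

theorem exists_character_eq_mul [CharZero k] [FiniteDimensional k W]
    {σ : Representation k H W} (h : ∀ n : N, σ.character n = ρ.character n) :
    ∃ χ : (H ⧸ N) →* kˣ, ∀ g, σ.character g = χ g * ρ.character g := by
  obtain ⟨e⟩ := nonempty_equiv_of_character_eq (ρ := ρ.comp N.subtype) (σ := σ.comp N.subtype)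
    (funext fun n => (h n).symm)
  let σ' : Representation k H V := (e.toLinearEquiv.symm.conjAlgEquiv k : _ →* _).comp σ
  have hσ' : σ'.comp N.subtype = ρ.comp N.subtype :=
    MonoidHom.ext fun n => Equiv.conj_apply_self n e.symm
  obtain ⟨χ, hχ⟩ := exists_eq_twist_mk hσ'
  refine ⟨χ, fun g => ?_⟩
  calc σ.character g = σ'.character g := (LinearMap.trace_conj' _ _).symm
    _ = χ g * ρ.character g := hχ ▸ character_twist _ ρ g

end Twist

theorem charMul_left_injective {N : Subgroup G} [N.Normal] {ρ : G → ℂ}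
    (hρ : ∀ g, ∃ n : N, ρ (g * n) ≠ 0) :
    Function.Injective fun χ : (G ⧸ N) →* ℂˣ => charMul N χ ρ := by
  intro χ ψ h
  refine MonoidHom.ext fun q => ?_
  induction q using QuotientGroup.induction_on with | H g =>
  obtain ⟨n, hn⟩ := hρ g
  have hcoset : ((g * n : G) : G ⧸ N) = g := QuotientGroup.mk_mul_of_mem g n.2
  have hgn : (χ (g * n : G) : ℂ) * ρ (g * n) = ψ (g * n : G) * ρ (g * n) := congrFun h (g * n)
  rw [hcoset] at hgn
  exact Units.ext (mul_right_cancel₀ hn hgn)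

open scoped IsMulCommutative in
theorem ncard_qhatOrbit_of_injective {N : Subgroup G} [N.Normal] [N.FiniteIndex]
    [IsMulCommutative (G ⧸ N)] {ρ : G → ℂ}
    (h : Function.Injective fun χ : (G ⧸ N) →* ℂˣ => charMul N χ ρ) :
    (qhatOrbit N ρ).ncard = N.index := by
  calc (qhatOrbit N ρ).ncard = (Set.range fun χ : (G ⧸ N) →* ℂˣ => charMul N χ ρ).ncard := by
        simp only [qhatOrbit, Set.range, eq_comm]
    _ = Nat.card ((G ⧸ N) →* ℂˣ) := Set.ncard_range_of_injective h
    _ = N.index := CommGroup.card_monoidHom_of_hasEnoughRootsOfUnity (G ⧸ N) ℂ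

theorem restrict_fiber_eq_orbit_general (G : Type) [Group G] (N : Subgroup G) [N.Normal]
    (τ : ↥N → ℂ) (hτ : IsIrrChar ↥N τ)
    (ρ : G → ℂ) (hρ : IsChar G ρ) (hres : (fun n : ↥N => ρ ↑n) = τ) :
    {ρ' : G → ℂ | IsIrrChar G ρ' ∧ (fun n : ↥N => ρ' ↑n) = τ} = qhatOrbit N ρ ∧
    Function.Injective fun χ : (G ⧸ N) →* ℂˣ => charMul N χ ρ := by
  obtain ⟨V, rfl⟩ := hρ
  obtain ⟨U, hU, hUτ⟩ := hτ
  have := isIrreducible_of_simple U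
  obtain ⟨e⟩ := nonempty_equiv_of_character_eq (σ := V.ρ.comp N.subtype) (hUτ.symm.trans hres.symm)
  have := isIrreducible_of_equiv e
  refine ⟨Set.Subset.antisymm ?_ ?_, charMul_left_injective exists_character_mul_ne_zero⟩
  · rintro _ ⟨⟨W, -, rfl⟩, hW⟩
    obtain ⟨χ, hχ⟩ := exists_character_eq_mul (ρ := V.ρ) (σ := W.ρ) (congrFun (hW.trans hres.symm))
    exact ⟨χ, funext hχ⟩
  · rintro _ ⟨χ, rfl⟩
    let W := FDRep.of (twist (χ.comp (QuotientGroup.mk' N)) V.ρ)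
    have : IsIrreducible W.ρ := isIrreducible_twist_mk χ V.ρ
    have hW : charMul N χ V.character = W.character :=
      funext fun g => (character_twist (χ.comp (QuotientGroup.mk' N)) V.ρ g).symm
    refine ⟨⟨W, simple_of_isIrreducible W, hW⟩, hres ▸ funext fun n => ?_⟩
    have hn : ((n : G) : G ⧸ N) = 1 := (QuotientGroup.eq_one_iff _).mpr n.2
    simp [charMul, hn]

/-- If `G ⧸ N` is cyclic and `ρ ∈ Irr G` restricts to `τ ∈ Irr N`, then
the irreducible characters of `G` restricting to `τ` are exactly the `Q̂`-orbit of `ρ`,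
which has `(G:N)` elements. -/
theorem restrict_fiber_eq_orbit
    (G : Type) [Group G] [Fintype G] (N : Subgroup G) [N.Normal]
    (hcyc : IsCyclic (G ⧸ N))
    (τ : ↥N → ℂ) (hτ : IsIrrChar ↥N τ)
    (ρ : G → ℂ) (hρ : IsIrrChar G ρ) (hres : (fun n : ↥N => ρ ↑n) = τ) :
    {ρ' : G → ℂ | IsIrrChar G ρ' ∧ (fun n : ↥N => ρ' ↑n) = τ} = qhatOrbit N ρ ∧
    (qhatOrbit N ρ).ncard = N.index := by
  obtain ⟨hfiber, hinj⟩ := restrict_fiber_eq_orbit_general G N τ hτ ρ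
    (hρ.imp fun _ => And.right) hres
  exact ⟨hfiber, ncard_qhatOrbit_of_injective hinj⟩
end

section
/- Let G be a finite group and N a normal subgroup with G/N cyclic. Then N has a non-trivial irreducible complex character that extends to a character of G if and only if G has no conjugacy class of size #N. -/
/-!
Since `G ⧸ N` is abelian, the conjugacy class of `a` lies in `aN`, so it has `#N` elements exactly
when it is the whole coset.

Suppose that the restriction to `N` of a representation `ρ` of `G` is irreducible and nontrivial.
Then `∑ n : N, ρ n = 0`, so the character of `ρ` sums to zero over every coset `aN`. It does not
vanish identically there: by Burnside's theorem the operators `ρ n` span all endomorphisms, in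
particular `ρ a⁻¹`. Hence it is not constant on `aN`, and `aN` is not a single class.

Conversely, let `qN` generate `G ⧸ N` and let `b ∈ qN` not be conjugate to `q`. Some irreducible
character separates `q` from `b`; by symmetry, say that it does not vanish at `q`. Conjugation by
`ρ q` acts on the `N`-endomorphisms. An eigenvector `T` is an eigenvector of all of `G`, hence
invertible, and comparing the traces of `ρ q` and `T⁻¹ * ρ q * T` shows that its eigenvalue is `1`.
As the action has finite order, it is trivial, so every `N`-endomorphism is a `G`-endomorphism,
that is, a scalar, and `ρ` is irreducible on `N`. It is nontrivial there because it separates two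
elements of `qN`.
-/

open scoped BigOperators

variable {G : Type} [Group G]

open Module Representation
open scoped MonoidAlgebra

theorem isSimpleModule_of_noZeroDivisors_end {R M : Type*} [Ring R] [AddCommGroup M] [Module R M]
    [IsSemisimpleModule R M] [Nontrivial M] [NoZeroDivisors (End R M)] : IsSimpleModule R M := by
  refine (isSimpleModule_iff R M).2 ⟨fun p ↦ ?_⟩
  obtain ⟨p', h⟩ := exists_isCompl p
  have idem : p.projection p' h * (1 - p.projection p' h) = 0 :=
    (Submodule.isIdempotentElem_projection h).mul_one_sub_self
  rcases mul_eq_zero.1 idem with h0 | h1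
  · exact .inl (by rw [← Submodule.range_projection h, h0, LinearMap.range_zero])
  · exact .inr (by rw [← Submodule.range_projection h, ← sub_eq_zero.1 h1,
      End.one_eq_id, LinearMap.range_id])

theorem lsmul_surjective_of_isSimpleModule {k A M : Type*} [Field k] [IsAlgClosed k] [Ring A]
    [Algebra k A] [AddCommGroup M] [Module k M] [Module A M] [IsScalarTower k A M]
    [FiniteDimensional k M] [IsSimpleModule A M] :
    Function.Surjective (Algebra.lsmul k k M : A →ₐ[k] End k M) := by
  intro T
  let T' : End (End A M) M :=
    { T with
      map_smul' φ v := by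
        obtain ⟨c, rfl⟩ := (IsSimpleModule.algebraMap_end_bijective_of_isAlgClosed k).2 φ
        exact T.map_smul c v }
  have : Module.Finite (End A M) M := .of_restrictScalars_finite k _ _
  obtain ⟨r, hr⟩ := Module.Finite.toModuleEnd_moduleEnd_surjective (R := A) (M := M) T'
  exact ⟨r, LinearMap.ext fun v ↦ congr($hr v)⟩

theorem eq_one_of_pow_eq_one_of_spectrum_subset_singleton {k A : Type*} [Field k]
    [IsAlgClosed k] [Ring A] [Algebra k A] {a : A} {n : ℕ} (hn : (n : k) ≠ 0) (ha : a ^ n = 1)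
    (hs : spectrum k a ⊆ {1}) : a = 1 := by
  set p : Polynomial k := ∑ i ∈ Finset.range n, Polynomial.X ^ i with hp
  have eval_one : p.eval 1 = n := by simp [hp, Polynomial.eval_finsetSum]
  have isUnit_aeval : IsUnit (p.aeval a) := by
    by_contra hu
    have p_ne_zero : p ≠ 0 := by intro h; simp [h, hn.symm] at eval_one
    rw [(IsAlgClosed.splits p).eq_prod_roots, map_mul, Polynomial.aeval_C] at hu
    obtain ⟨c, hc, hpc⟩ := spectrum.exists_mem_of_not_isUnit_aeval_prod fun h ↦
      hu (((Polynomial.leadingCoeff_ne_zero.2 p_ne_zero).isUnit.map _).mul h)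
    exact hn (by rw [← eval_one, ← hs hc, hpc])
  have mul_aeval : (a - 1) * p.aeval a = 0 := by simp [hp, mul_geom_sum, ha]
  exact sub_eq_zero.1 (isUnit_aeval.mul_left_eq_zero.1 mul_aeval)

section Irreducible

variable {k Γ V : Type*} [Field k] [AddCommGroup V] [Module k V]

section Monoid

variable [Monoid Γ] (ρ : Representation k Γ V)

theorem nontrivial_of_isIrreducible_s15 [ρ.IsIrreducible] : Nontrivial V :=
  IsSimpleModule.nontrivial k[Γ] ρ.asModule

theorem asAlgebraHom_surjective_s15 [IsAlgClosed k] [FiniteDimensional k V] [ρ.IsIrreducible] :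
    Function.Surjective ρ.asAlgebraHom := by
  have := (irreducible_iff_isSimpleModule_asModule ρ).1 ‹_›
  have : FiniteDimensional k ρ.asModule := ‹FiniteDimensional k V›
  exact lsmul_surjective_of_isSimpleModule (k := k) (A := k[Γ]) (M := ρ.asModule)

end Monoid

variable [Group Γ] (ρ : Representation k Γ V)

theorem isIrreducible_iff_finrank_intertwiningMap [IsAlgClosed k] [FiniteDimensional k V] [Finite Γ]
    [NeZero (Nat.card Γ : k)] :
    ρ.IsIrreducible ↔ finrank k (IntertwiningMap ρ ρ) = 1 := by
  refine ⟨fun _ ↦ IsIrreducible.finrank_intertwiningMap_self ρ, fun h ↦ ?_⟩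
  rw [(IntertwiningMap.equivAlgEnd (ρ := ρ)).toLinearEquiv.finrank_eq] at h
  rw [irreducible_iff_isSimpleModule_asModule]
  let e := RingEquiv.ofBijective _ (Free.bijective_algebraMap_of_finrank_eq_one h)
  have : NoZeroDivisors (End k[Γ] ρ.asModule) :=
    e.symm.injective.noZeroDivisors _ (map_zero _) (map_mul _)
  have : Nontrivial ρ.asModule := by
    by_contra hV
    have := not_nontrivial_iff_subsingleton.1 hV
    simp [finrank_zero_of_subsingleton] at h
  exact isSimpleModule_of_noZeroDivisors_end

theorem isIrreducible_iff_sum_character_mul_inv [IsAlgClosed k] [CharZero k]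
    [FiniteDimensional k V] [Fintype Γ] :
    ρ.IsIrreducible ↔ ∑ g, ρ.character g * ρ.character g⁻¹ = Nat.card Γ := by
  have card_ne_zero : (Nat.card Γ : k) ≠ 0 := Nat.cast_ne_zero.2 Nat.card_pos.ne'
  have : NeZero (Nat.card Γ : k) := ⟨card_ne_zero⟩
  have := invertibleOfNonzero card_ne_zero
  rw [isIrreducible_iff_finrank_intertwiningMap, ← Nat.cast_inj (R := k),
    ← card_inv_mul_sum_char_mul_char_eq_finrank, Nat.cast_one, inv_mul_eq_one₀ card_ne_zero,
    eq_comm]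

theorem norm_eq_zero_of_not_isTrivial [Fintype Γ] [ρ.IsIrreducible] (h : ¬ ρ.IsTrivial) :
    ρ.norm = 0 := by
  let fixed : Subrepresentation ρ := ⟨ρ.invariants, fun g v hv ↦ by rwa [hv g]⟩
  rcases eq_bot_or_eq_top fixed with hbot | htop
  · have invariants_eq_bot : ρ.invariants = ⊥ := congr(Subrepresentation.toSubmodule $hbot)
    refine LinearMap.ext fun v ↦ (Submodule.mem_bot k).1 ?_
    rw [← invariants_eq_bot]
    exact fun g ↦ ρ.self_norm_apply g v
  · have invariants_eq_top : ρ.invariants = ⊤ := congr(Subrepresentation.toSubmodule $htop)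
    have mem_invariants (v : V) : v ∈ ρ.invariants := invariants_eq_top ▸ Submodule.mem_top
    exact absurd ⟨fun g ↦ LinearMap.ext fun v ↦ mem_invariants v g⟩ h

theorem finrank_eq_one_of_isTrivial [ρ.IsIrreducible] [ρ.IsTrivial] : finrank k V = 1 := by
  have := nontrivial_of_isIrreducible_s15 ρ
  obtain ⟨v, hv⟩ := exists_ne (0 : V)
  let line : Subrepresentation ρ := ⟨k ∙ v, fun g w hw ↦ by simpa using hw⟩
  have line_ne_bot : line ≠ ⊥ := fun h ↦
    hv (Submodule.span_singleton_eq_bot.1 congr(Subrepresentation.toSubmodule $h))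
  rw [finrank_eq_one_iff_of_nonzero v hv]
  exact congr(Subrepresentation.toSubmodule $((eq_bot_or_eq_top line).resolve_left line_ne_bot))

theorem character_eq_one_iff_isTrivial [CharZero k] [FiniteDimensional k V] [ρ.IsIrreducible] :
    ρ.character = 1 ↔ ρ.IsTrivial := by
  refine ⟨fun h ↦ ⟨fun g ↦ ?_⟩, fun _ ↦ funext fun g ↦ ?_⟩
  · have finrank_eq_one : finrank k V = 1 := by
      have := (char_one ρ).symm.trans (congrFun h 1)
      simpa using this
    obtain ⟨c, hc⟩ := (Free.bijective_algebraMap_of_finrank_eq_one (R := k) (S := End k V)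
      (by rw [finrank_linearMap, finrank_eq_one])).2 (ρ g)
    have c_eq_one : c = 1 := by
      have := congrFun h g
      rw [character, ← hc, algebraMap_end_eq_smul_id, map_smul, LinearMap.trace_id] at this
      simpa [finrank_eq_one] using this
    rw [← hc, c_eq_one, map_one, End.one_eq_id]
  · simp [character, finrank_eq_one_of_isTrivial ρ]

section Restriction

variable {ρ} {N : Subgroup Γ}

theorem exists_character_mul_ne_zero_s15 [IsAlgClosed k] [CharZero k] [FiniteDimensional k V]
    [IsIrreducible (ρ.comp N.subtype)] (a : Γ) :
    ∃ n : N, ρ.character (a * n) ≠ 0 := by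
  by_contra! h
  have trace_eq_zero (x : k[N]) :
      LinearMap.trace k V (ρ a * asAlgebraHom (ρ.comp N.subtype) x) = 0 := by
    induction x using MonoidAlgebra.induction_on with
    | of n => simpa [character] using h n
    | add x y hx hy => simp [mul_add, hx, hy]
    | smul c x hx => simp [hx]
  obtain ⟨x, hx⟩ := asAlgebraHom_surjective_s15 (ρ.comp N.subtype) (ρ a⁻¹)
  have := nontrivial_of_isIrreducible_s15 (ρ.comp N.subtype)
  simpa [hx, ← map_mul, finrank_pos.ne'] using trace_eq_zero x

theorem sum_character_mul_eq_zero [Fintype N] [IsIrreducible (ρ.comp N.subtype)]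
    (h : ¬ IsTrivial (ρ.comp N.subtype)) (a : Γ) : ∑ n : N, ρ.character (a * n) = 0 := by
  have := congr(LinearMap.trace k V (ρ a * $(norm_eq_zero_of_not_isTrivial _ h)))
  simpa [Representation.norm, Finset.mul_sum, character] using this

theorem exists_character_mul_ne [IsAlgClosed k] [CharZero k] [FiniteDimensional k V]
    [Finite N] [IsIrreducible (ρ.comp N.subtype)] (h : ¬ IsTrivial (ρ.comp N.subtype))
    (a : Γ) : ∃ n : N, ρ.character (a * n) ≠ ρ.character a := by
  have := Fintype.ofFinite N
  by_contra! const
  obtain ⟨n, hn⟩ := exists_character_mul_ne_zero_s15 (ρ := ρ) (N := N) a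
  have sum_eq_zero := sum_character_mul_eq_zero h a
  simp only [const, Finset.sum_const, Finset.card_univ, smul_eq_zero, Fintype.card_ne_zero,
    false_or] at sum_eq_zero
  exact hn (by rw [const, sum_eq_zero])

theorem exists_not_isConj_mul [IsAlgClosed k] [CharZero k] [FiniteDimensional k V] [Finite N]
    [IsIrreducible (ρ.comp N.subtype)] (h : ¬ IsTrivial (ρ.comp N.subtype)) (a : Γ) :
    ∃ n : N, ¬ IsConj a (a * n) := by
  obtain ⟨n, hn⟩ := exists_character_mul_ne h a
  refine ⟨n, fun conj ↦ hn ?_⟩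
  obtain ⟨g, hg⟩ := isConj_iff.1 conj
  rw [← hg, char_conj]

theorem isUnit_of_linHom_apply_eq_smul [FiniteDimensional k V] [ρ.IsIrreducible]
    {T : V →ₗ[k] V} (hT : T ≠ 0) (h : ∀ g, ∃ c : k, linHom ρ ρ g T = c • T) : IsUnit T := by
  have apply_mem_ker {g : Γ} {v : V} (hv : v ∈ LinearMap.ker T) : ρ g v ∈ LinearMap.ker T := by
    obtain ⟨c, hc⟩ := h g⁻¹
    have := congr(ρ g ($hc v))
    simpa [LinearMap.mem_ker.1 hv] using this
  let kernel : Subrepresentation ρ := ⟨LinearMap.ker T, fun _ _ ↦ apply_mem_ker⟩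
  rcases eq_bot_or_eq_top kernel with hbot | htop
  · exact (LinearMap.isUnit_iff_ker_eq_bot T).2 congr(Subrepresentation.toSubmodule $hbot)
  · exact absurd (LinearMap.ker_eq_top.1 congr(Subrepresentation.toSubmodule $htop)) hT

theorem eq_one_of_linHom_apply_eq_smul {T : V →ₗ[k] V} (hT : IsUnit T) {q : Γ} {c : k}
    (h : linHom ρ ρ q T = c • T) (hq : ρ.character q ≠ 0) : c = 1 := by
  obtain ⟨T, rfl⟩ := hT
  have semiconj : ρ q * T = c • (T * ρ q) := by
    rw [← smul_mul_assoc, ← h]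
    ext v
    simp
  have trace_eq : ρ.character q = c • ρ.character q := calc
    LinearMap.trace k V (ρ q) = LinearMap.trace k V (ρ q * T * ↑T⁻¹) := by simp
    _ = c • LinearMap.trace k V (T * ρ q * ↑T⁻¹) := by rw [semiconj, smul_mul_assoc, map_smul]
    _ = c • LinearMap.trace k V (ρ q) := by rw [LinearMap.trace_mul_cycle]; simp
  exact mul_right_cancel₀ hq (by rw [one_mul]; exact trace_eq.symm)

theorem quotientToInvariants_linHom_apply_eq_one [IsAlgClosed k] [CharZero k]
    [FiniteDimensional k V] [Finite Γ] [N.Normal] [ρ.IsIrreducible] {q : Γ}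
    (hq : ∀ x : Γ ⧸ N, x ∈ Subgroup.zpowers (q : Γ ⧸ N)) (hchar : ρ.character q ≠ 0) :
    (linHom ρ ρ).quotientToInvariants N (q : Γ ⧸ N) = 1 := by
  set σ := (linHom ρ ρ).quotientToInvariants N
  have spectrum_subset : spectrum k (σ q) ⊆ {1} := by
    intro c hc
    obtain ⟨T, hT⟩ := (End.hasEigenvalue_iff_mem_spectrum.2 hc).exists_hasEigenvector
    -- The powers of `q` cover `Γ ⧸ N`, so `T` is an eigenvector of all of `Γ`.
    have isUnit_T : IsUnit (T : V →ₗ[k] V) := by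
      refine isUnit_of_linHom_apply_eq_smul (ρ := ρ) (by simpa using hT.2) fun g ↦ ?_
      obtain ⟨i, hi : (q : Γ ⧸ N) ^ i = g⟩ := mem_powers_iff_mem_zpowers.2 (hq g)
      refine ⟨c ^ i, ?_⟩
      have := hT.pow_apply i
      rw [← map_pow, hi] at this
      exact Subtype.ext_iff.1 this
    exact eq_one_of_linHom_apply_eq_smul isUnit_T (Subtype.ext_iff.1 hT.apply_eq_smul) hchar
  exact eq_one_of_pow_eq_one_of_spectrum_subset_singleton (n := Nat.card (Γ ⧸ N))
    (Nat.cast_ne_zero.2 Nat.card_pos.ne') (by rw [← map_pow, pow_card_eq_one', map_one])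
    spectrum_subset

theorem isIrreducible_comp_subtype_of_character_ne_zero [IsAlgClosed k] [CharZero k]
    [FiniteDimensional k V] [Finite Γ] [N.Normal] [ρ.IsIrreducible] {q : Γ}
    (hq : ∀ x : Γ ⧸ N, x ∈ Subgroup.zpowers (q : Γ ⧸ N)) (hchar : ρ.character q ≠ 0) :
    IsIrreducible (ρ.comp N.subtype) := by
  have σ_q := quotientToInvariants_linHom_apply_eq_one hq hchar
  set σ := (linHom ρ ρ).quotientToInvariants N
  have invariants_eq : invariants ((linHom ρ ρ).comp N.subtype) = (linHom ρ ρ).invariants := by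
    refine le_antisymm (fun T hT g ↦ ?_) fun T hT n ↦ hT n
    have fixed : σ q ⟨T, hT⟩ = ⟨T, hT⟩ := by rw [σ_q, End.one_apply]
    exact Subtype.ext_iff.1 ((mem_invariants_iff_of_forall_mem_zpowers σ q hq _).2 fixed g)
  have : NeZero (Nat.card N : k) := ⟨Nat.cast_ne_zero.2 Nat.card_pos.ne'⟩
  rw [isIrreducible_iff_finrank_intertwiningMap, ← (invariantsEquivIntertwiningMap _ _).finrank_eq]
  change finrank k (invariants (MonoidHom.comp (linHom ρ ρ) N.subtype)) = 1
  rw [invariants_eq, (invariantsEquivIntertwiningMap _ _).finrank_eq,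
    IsIrreducible.finrank_intertwiningMap_self]

end Restriction

end Irreducible

section ConjSum

/-- The sum of all conjugates of `a` in the group algebra: a multiple of the sum over the
conjugacy class of `a`, hence central. -/
noncomputable def conjSum (k : Type*) {Γ : Type*} [Semiring k] [Group Γ] [Fintype Γ] (a : Γ) :
    k[Γ] :=
  ∑ g : Γ, MonoidAlgebra.of k Γ (g * a * g⁻¹)

variable {k Γ : Type*} [CommRing k] [Group Γ] [Fintype Γ]

theorem conjSum_mem_center (a : Γ) : conjSum k a ∈ Submonoid.center k[Γ] := by
  rw [Submonoid.mem_center_iff]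
  intro x
  induction x using MonoidAlgebra.induction_on with
  | of g =>
    rw [conjSum, Finset.mul_sum, Finset.sum_mul]
    refine Fintype.sum_equiv (Equiv.mulLeft g) _ _ fun h ↦ ?_
    simp [mul_assoc]
  | add x y hx hy => rw [add_mul, mul_add, hx, hy]
  | smul c x hx => rw [smul_mul_assoc, mul_smul_comm, hx]

theorem isConj_of_conjSum_eq [CharZero k] {a b : Γ} (h : conjSum k a = conjSum k b) :
    IsConj a b := by
  classical
  have coeff_conjSum (c : Γ) :
      (conjSum k c).coeff a = (Finset.univ.filter fun g ↦ g * c * g⁻¹ = a).card := by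
    simp [conjSum, MonoidAlgebra.of_apply, Finsupp.single_apply]
  have coeff_ne_zero : (conjSum k b).coeff a ≠ 0 := by
    rw [← h, coeff_conjSum, Nat.cast_ne_zero, Finset.card_ne_zero]
    exact ⟨1, by simp⟩
  rw [coeff_conjSum, Nat.cast_ne_zero, Finset.card_ne_zero] at coeff_ne_zero
  obtain ⟨g, hg⟩ := coeff_ne_zero
  exact (isConj_iff.2 ⟨g, (Finset.mem_filter.1 hg).2⟩).symm

end ConjSum

section Separation

universe u v

variable {k : Type u} {Γ : Type v} [Field k] [Group Γ]

theorem asAlgebraHom_eq_zero_of_trace_eq_zero {V : Type*} [AddCommGroup V] [Module k V]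
    [FiniteDimensional k V] [IsAlgClosed k] [CharZero k] (ρ : Representation k Γ V)
    [ρ.IsIrreducible] {z : k[Γ]} (hz : z ∈ Submonoid.center k[Γ])
    (htrace : LinearMap.trace k V (ρ.asAlgebraHom z) = 0) : ρ.asAlgebraHom z = 0 := by
  have := nontrivial_of_isIrreducible_s15 ρ
  obtain ⟨c, hc⟩ := (IsIrreducible.algebraMap_intertwiningMap_bijective_of_isAlgClosed (ρ := ρ)).2
    (IntertwiningMap.centralAlgebraMul ρ hz)
  have scalar : c • LinearMap.id = ρ.asAlgebraHom z := congr(($hc).toLinearMap)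
  have c_eq_zero : c = 0 := by simpa [← scalar, finrank_pos.ne'] using htrace
  rw [← scalar, c_eq_zero, zero_smul]

section OfModule

variable (M : Type*) [AddCommGroup M] [Module k M] [Module k[Γ] M] [IsScalarTower k k[Γ] M]

theorem asAlgebraHom_ofModule'_apply (r : k[Γ]) (x : M) :
    (ofModule' M : Representation k Γ M).asAlgebraHom r x = r • x :=
  congr($(Equiv.apply_symm_apply (MonoidAlgebra.lift k (End k M) Γ) (Algebra.lsmul k k M)) r x)

theorem isIrreducible_ofModule'_s15 [IsSimpleModule k[Γ] M] :
    (ofModule' M : Representation k Γ M).IsIrreducible := by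
  rw [irreducible_iff_isSimpleModule_asModule]
  let e : (ofModule' M : Representation k Γ M).asModule ≃ₗ[k[Γ]] M :=
    { (ofModule' M).asModuleEquiv.toAddEquiv with
      map_smul' r x := (asModuleEquiv_map_smul _ r x).trans (asAlgebraHom_ofModule'_apply M r _) }
  exact IsSimpleModule.congr e

end OfModule

theorem eq_zero_of_forall_asAlgebraHom_eq_zero [Finite Γ] [NeZero (Nat.card Γ : k)] {z : k[Γ]}
    (h : ∀ (V : Type max u v) [AddCommGroup V] [Module k V] [FiniteDimensional k V]
      (ρ : Representation k Γ V), ρ.IsIrreducible → ρ.asAlgebraHom z = 0) : z = 0 := by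
  have mem_jacobson : z ∈ Module.jacobson k[Γ] k[Γ] := by
    refine Submodule.mem_sInf.2 fun m hm ↦ ?_
    have : IsSimpleModule k[Γ] (k[Γ] ⧸ m) := isSimpleModule_iff_isCoatom.2 hm
    have : FiniteDimensional k (k[Γ] ⧸ m) := Module.Finite.trans k[Γ] _
    have smul_eq_zero : z • Submodule.Quotient.mk (p := m) 1 = 0 := by
      rw [← asAlgebraHom_ofModule'_apply, h _ _ (isIrreducible_ofModule'_s15 _), LinearMap.zero_apply]
    rwa [← Submodule.Quotient.mk_smul, Submodule.Quotient.mk_eq_zero, smul_eq_mul, mul_one]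
      at smul_eq_zero
  rwa [IsSemisimpleModule.jacobson_eq_bot, Submodule.mem_bot] at mem_jacobson

theorem trace_asAlgebraHom_conjSum [Fintype Γ] {V : Type*} [AddCommGroup V] [Module k V]
    (ρ : Representation k Γ V) (a : Γ) :
    LinearMap.trace k V (ρ.asAlgebraHom (conjSum k a)) = Fintype.card Γ * ρ.character a := by
  have trace_conj (g : Γ) : LinearMap.trace k V (ρ (g * a * g⁻¹)) = ρ.character a :=
    ρ.char_conj a g
  simp only [conjSum, map_sum, asAlgebraHom_of, trace_conj, Finset.sum_const, Finset.card_univ,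
    nsmul_eq_mul]

theorem exists_character_ne_of_not_isConj [Finite Γ] [IsAlgClosed k] [CharZero k] {a b : Γ}
    (h : ¬ IsConj a b) : ∃ (V : Type max u v) (_ : AddCommGroup V) (_ : Module k V)
      (_ : FiniteDimensional k V) (ρ : Representation k Γ V),
      ρ.IsIrreducible ∧ ρ.character a ≠ ρ.character b := by
  have := Fintype.ofFinite Γ
  by_contra! character_eq
  have : NeZero (Nat.card Γ : k) := ⟨Nat.cast_ne_zero.2 Nat.card_pos.ne'⟩
  refine h (isConj_of_conjSum_eq (k := k) (sub_eq_zero.1 ?_))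
  refine eq_zero_of_forall_asAlgebraHom_eq_zero fun V _ _ _ ρ hρ ↦ ?_
  have conjSum_sub_mem : conjSum k a - conjSum k b ∈ Submonoid.center k[Γ] :=
    (Subring.center k[Γ]).sub_mem (conjSum_mem_center a) (conjSum_mem_center b)
  refine asAlgebraHom_eq_zero_of_trace_eq_zero ρ conjSum_sub_mem ?_
  rw [map_sub, map_sub, trace_asAlgebraHom_conjSum, trace_asAlgebraHom_conjSum,
    character_eq V _ _ ‹_› ρ hρ, sub_self]

theorem exists_isIrreducible_comp_subtype_of_not_isConj [Finite Γ] [IsAlgClosed k] [CharZero k]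
    {N : Subgroup Γ} [N.Normal] {q b : Γ}
    (hq : ∀ x : Γ ⧸ N, x ∈ Subgroup.zpowers (q : Γ ⧸ N)) (hb : (b : Γ ⧸ N) = q)
    (h : ¬ IsConj q b) : ∃ (V : Type max u v) (_ : AddCommGroup V) (_ : Module k V)
      (_ : FiniteDimensional k V) (ρ : Representation k Γ V), ρ.IsIrreducible ∧
      IsIrreducible (ρ.comp N.subtype) ∧ ¬ IsTrivial (ρ.comp N.subtype) := by
  obtain ⟨V, _, _, _, ρ, hρ, character_ne⟩ := exists_character_ne_of_not_isConj (k := k) h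
  refine ⟨V, _, _, ‹_›, ρ, hρ, ?_, fun _ ↦ ?_⟩
  · by_cases hq0 : ρ.character q = 0
    · exact isIrreducible_comp_subtype_of_character_ne_zero (hb ▸ hq) (hq0 ▸ character_ne.symm)
    · exact isIrreducible_comp_subtype_of_character_ne_zero hq hq0
  · exact character_ne congr(LinearMap.trace k V $(ρ.apply_eq_of_coe_eq N q b hb.symm))

end Separation

section Coset

variable (N : Subgroup G) [N.Normal]

theorem ncard_coset (a : G) : (coset N a).ncard = Nat.card N := by
  have coset_eq : coset N a = (a * ·) '' (N : Set G) := by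
    ext g
    simp only [coset, Set.mem_ofPred_eq, Set.image_mul_left, Set.mem_preimage, SetLike.mem_coe]
    rw [eq_comm, QuotientGroup.eq]
  rw [coset_eq, Set.ncard_image_of_injective _ (mul_right_injective a)]
  rfl

theorem carrier_mk_subset_coset [IsMulCommutative (G ⧸ N)] (a : G) :
    (ConjClasses.mk a).carrier ⊆ coset N a := by
  intro g hg
  rw [ConjClasses.mem_carrier_iff_mk_eq, ConjClasses.mk_eq_mk_iff_isConj, isConj_comm,
    isConj_iff] at hg
  obtain ⟨x, rfl⟩ := hg
  rw [coset, Set.mem_ofPred_eq, QuotientGroup.mk_mul, QuotientGroup.mk_mul,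
    mul_comm' (x : G ⧸ N), QuotientGroup.mk_inv, mul_inv_cancel_right]

theorem ncard_carrier_mk_eq_card_iff [Finite G] [IsMulCommutative (G ⧸ N)] {a : G} :
    (ConjClasses.mk a).carrier.ncard = Nat.card N ↔ ∀ b ∈ coset N a, IsConj a b := by
  have coset_subset_iff : coset N a ⊆ (ConjClasses.mk a).carrier ↔ ∀ b ∈ coset N a, IsConj a b :=
    forall₂_congr fun b _ ↦ by
      rw [ConjClasses.mem_carrier_iff_mk_eq, ConjClasses.mk_eq_mk_iff_isConj, isConj_comm]
  rw [← ncard_coset N a, ← coset_subset_iff]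
  exact ⟨fun h ↦ (Set.eq_of_subset_of_ncard_le (carrier_mk_subset_coset N a) h.ge).ge,
    fun h ↦ by rw [(carrier_mk_subset_coset N a).antisymm h]⟩

end Coset

theorem isIrrChar_character_iff [Finite G] {V : Type} [AddCommGroup V] [Module ℂ V]
    [FiniteDimensional ℂ V] (ρ : Representation ℂ G V) :
    IsIrrChar G ρ.character ↔ ρ.IsIrreducible := by
  have := Fintype.ofFinite G
  rw [isIrreducible_iff_sum_character_mul_inv]
  constructor
  · rintro ⟨W, hW, hρ⟩
    rw [hρ]
    exact W.simple_iff_char_is_norm_one.1 hW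
  · exact fun h ↦ ⟨FDRep.of ρ, (FDRep.of ρ).simple_iff_char_is_norm_one.2 h, rfl⟩

/-- If `G ⧸ N` is cyclic, then `N` has a non-trivial irreducible
character extending to `G` iff `G` has no conjugacy class of size `#N`. -/
theorem nontrivial_extension_iff_no_class_of_size_N
    (G : Type) [Group G] [Fintype G] (N : Subgroup G) [N.Normal]
    (hcyc : IsCyclic (G ⧸ N)) :
    (∃ τ : ↥N → ℂ, IsIrrChar ↥N τ ∧ τ ≠ (fun _ => 1) ∧
        ∃ ρ : G → ℂ, IsIrrChar G ρ ∧ (fun n : ↥N => ρ ↑n) = τ) ↔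
      ¬ ∃ c : ConjClasses G, c.carrier.ncard = Nat.card ↥N := by
  have := hcyc.isMulCommutative
  constructor
  · rintro ⟨_, hτ, τ_ne_one, _, ⟨V, -, rfl⟩, rfl⟩ ⟨c, hc⟩
    obtain ⟨a, rfl⟩ := ConjClasses.mk_surjective c
    have irreducible : IsIrreducible (V.ρ.comp N.subtype) := (isIrrChar_character_iff _).1 hτ
    have not_isTrivial : ¬ IsTrivial (V.ρ.comp N.subtype) :=
      fun h ↦ τ_ne_one ((character_eq_one_iff_isTrivial _).2 h)
    obtain ⟨n, not_conj⟩ := exists_not_isConj_mul not_isTrivial a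
    exact not_conj ((ncard_carrier_mk_eq_card_iff N).1 hc (a * n) (by simp [coset]))
  · intro no_class
    obtain ⟨x, hx⟩ := hcyc.exists_generator
    obtain ⟨q, rfl⟩ := QuotientGroup.mk_surjective x
    obtain ⟨b, hb : (b : G ⧸ N) = q, not_conj⟩ : ∃ b ∈ coset N q, ¬ IsConj q b := by
      by_contra! h
      exact no_class ⟨_, (ncard_carrier_mk_eq_card_iff N).2 h⟩
    obtain ⟨V, _, _, _, ρ, irreducible, restriction_irreducible, not_isTrivial⟩ :=
      exists_isIrreducible_comp_subtype_of_not_isConj (k := ℂ) hx hb not_conj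
    exact ⟨_, (isIrrChar_character_iff (ρ.comp N.subtype)).2 restriction_irreducible,
      fun h ↦ not_isTrivial ((character_eq_one_iff_isTrivial _).1 h),
      ρ.character, (isIrrChar_character_iff ρ).2 irreducible, rfl⟩
end
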